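/- Let (H, r) be a coquasitriangular weak Hopf algebra over a field k. Then for all x, y ∈ H: Σ r(x⁽¹⁾⊗y⁽¹⁾)·ε_t(y⁽²⁾)·ε_s(x⁽²⁾) = Σ ε_t(x⁽¹⁾)·ε_s(y⁽¹⁾)·r(x⁽²⁾⊗y⁽²⁾). -/

import Mathlib

/-!
Both sides are rewritten as the same expression by expanding the counital maps. With
`Δ(1) = Σ aᵢ ⊗ bᵢ` one has `ε_t(z) = Σ ε(aᵢ z) bᵢ` and `ε_s(z) = Σ ε(z bⱼ) aⱼ`, so it suffices to
compare, for fixed `a, b ∈ H`, the scalars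
`Σ r(x⁽¹⁾⊗y⁽¹⁾) ε(a y⁽²⁾) ε(x⁽²⁾ b)` and `Σ ε(a x⁽¹⁾) ε(y⁽¹⁾ b) r(x⁽²⁾⊗y⁽²⁾)`.

Each is a convolution product of functionals on the coalgebra `H ⊗ H`. Axiom (r1) allows a factor
`ε(yx)` to be inserted to the right of `r`, and a factor `ε(xy)` to its left; two applications of
(WBA2) collapse
`Σ ε(y⁽¹⁾x⁽¹⁾) ε(a y⁽²⁾) ε(x⁽²⁾ b) = ε(a y x b)` and
`Σ ε(a x⁽¹⁾) ε(y⁽¹⁾ b) ε(x⁽²⁾y⁽²⁾) = ε(a x y b)`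
(lemmas `counit_swap_conv` and `conv_counit`). The scalars thus become
`Σ r(x⁽¹⁾⊗y⁽¹⁾) ε(a y⁽²⁾x⁽²⁾ b)` and `Σ ε(a x⁽¹⁾y⁽¹⁾ b) r(x⁽²⁾⊗y⁽²⁾)`, which agree by (r3).
-/

open scoped TensorProduct
open TensorProduct LinearMap

/-- A weak bialgebra over a field `k`: an algebra and coalgebra subject to the
weak compatibility axioms (WBA1)-(WBA3). -/
class WeakBialgebra (k H : Type*) [Field k] [Ring H] [Algebra k H]
    extends Coalgebra k H where
  /-- (WBA1): `Δ(xy) = Δ(x)Δ(y)`. -/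
  comul_mul : ∀ x y : H,
    Coalgebra.comul (R := k) (x * y) = Coalgebra.comul (R := k) x * Coalgebra.comul (R := k) y
  /-- (WBA2): `ε(xyz) = Σ ε(xy⁽¹⁾)ε(y⁽²⁾z)`. -/
  counit_mul_mul : ∀ x y z : H,
    Coalgebra.counit (R := k) (x * y * z) =
      TensorProduct.lid k k
        ((TensorProduct.map (Coalgebra.counit ∘ₗ LinearMap.mulLeft k x)
            (Coalgebra.counit ∘ₗ LinearMap.mulRight k z))
          (Coalgebra.comul (R := k) y))
  /-- (WBA2'): `ε(xyz) = Σ ε(xy⁽²⁾)ε(y⁽¹⁾z)`. -/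
  counit_mul_mul' : ∀ x y z : H,
    Coalgebra.counit (R := k) (x * y * z) =
      TensorProduct.lid k k
        ((TensorProduct.map (Coalgebra.counit ∘ₗ LinearMap.mulRight k z)
            (Coalgebra.counit ∘ₗ LinearMap.mulLeft k x))
          (Coalgebra.comul (R := k) y))
  /-- (WBA3): `((Δ⊗id)∘Δ)(1) = (Δ(1)⊗1)·(1⊗Δ(1))`. -/
  comul_comul_one :
    (TensorProduct.map (Coalgebra.comul (R := k)) (LinearMap.id (M := H)))
        (Coalgebra.comul (R := k) (1 : H)) =
      (Coalgebra.comul (R := k) (1 : H) ⊗ₜ[k] (1 : H)) *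
        ((TensorProduct.assoc k H H H).symm ((1 : H) ⊗ₜ[k] Coalgebra.comul (R := k) (1 : H)))
  /-- (WBA3'): `((Δ⊗id)∘Δ)(1) = (1⊗Δ(1))·(Δ(1)⊗1)`. -/
  comul_comul_one' :
    (TensorProduct.map (Coalgebra.comul (R := k)) (LinearMap.id (M := H)))
        (Coalgebra.comul (R := k) (1 : H)) =
      ((TensorProduct.assoc k H H H).symm ((1 : H) ⊗ₜ[k] Coalgebra.comul (R := k) (1 : H))) *
        (Coalgebra.comul (R := k) (1 : H) ⊗ₜ[k] (1 : H))

variable (k H : Type*) [Field k] [Ring H] [Algebra k H]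

/-- The target counital map `ε_t(x) = Σ ε(1⁽¹⁾x)·1⁽²⁾`. -/
noncomputable def εt [WeakBialgebra k H] : H →ₗ[k] H :=
  (TensorProduct.lid k H).toLinearMap ∘ₗ
    (LinearMap.rTensor H (Coalgebra.counit (R := k) (A := H))) ∘ₗ
    (LinearMap.mulLeft k (Coalgebra.comul (R := k) (1 : H))) ∘ₗ
    ((TensorProduct.mk k H H).flip 1)

/-- The source counital map `ε_s(x) = Σ 1⁽¹⁾·ε(x1⁽²⁾)`. -/
noncomputable def εs [WeakBialgebra k H] : H →ₗ[k] H :=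
  (TensorProduct.rid k H).toLinearMap ∘ₗ
    (LinearMap.lTensor H (Coalgebra.counit (R := k) (A := H))) ∘ₗ
    (LinearMap.mulRight k (Coalgebra.comul (R := k) (1 : H))) ∘ₗ
    (TensorProduct.mk k H H 1)

/-- The target base algebra `H_t = ε_t(H)`. -/
noncomputable def Ht [WeakBialgebra k H] : Submodule k H := LinearMap.range (εt k H)

/-- The source base algebra `H_s = ε_s(H)`. -/
noncomputable def Hs [WeakBialgebra k H] : Submodule k H := LinearMap.range (εs k H)

/-- A weak Hopf algebra: a weak bialgebra with an antipode `S` satisfying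
`Σ x⁽¹⁾S(x⁽²⁾) = ε_t(x)`, `Σ S(x⁽¹⁾)x⁽²⁾ = ε_s(x)` and `Σ S(x⁽¹⁾)x⁽²⁾S(x⁽³⁾) = S(x)`. -/
class WeakHopfAlgebra extends WeakBialgebra k H where
  antipode : H →ₗ[k] H
  mul_antipode : ∀ x : H,
    LinearMap.mul' k H ((LinearMap.lTensor H antipode) (Coalgebra.comul (R := k) x)) = εt k H x
  antipode_mul : ∀ x : H,
    LinearMap.mul' k H ((LinearMap.rTensor H antipode) (Coalgebra.comul (R := k) x)) = εs k H x
  antipode_mul_antipode : ∀ x : H,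
    LinearMap.mul' k H
      ((TensorProduct.map antipode (LinearMap.mul' k H ∘ₗ LinearMap.lTensor H antipode))
        ((LinearMap.lTensor H (Coalgebra.comul (R := k)))
          (Coalgebra.comul (R := k) x))) = antipode x

/-- The antipode of a weak Hopf algebra, as a linear map. -/
noncomputable def aS [WeakHopfAlgebra k H] : H →ₗ[k] H :=
  WeakHopfAlgebra.antipode (k := k) (H := H)

/-- A coquasitriangular weak Hopf algebra: a weak Hopf algebra with a universal
`r`-form `r : H ⊗ H → k` (with weak convolution inverse `r̄`) satisfying the
axioms (r1)–(r5). -/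
class CoquasitriangularWHA extends WeakHopfAlgebra k H where
  rform : H ⊗[k] H →ₗ[k] k
  rbar : H ⊗[k] H →ₗ[k] k
  /-- (r1): `r(x⊗y) = Σ ε(x⁽¹⁾y⁽¹⁾)r(x⁽²⁾⊗y⁽²⁾)`. -/
  rform_eq₁ : ∀ x y : H,
    rform (x ⊗ₜ[k] y) =
      TensorProduct.lid k k
        ((TensorProduct.map ((Coalgebra.counit (R := k) (A := H)) ∘ₗ LinearMap.mul' k H) rform)
          ((TensorProduct.tensorTensorTensorComm k H H H H)
            (Coalgebra.comul (R := k) x ⊗ₜ[k] Coalgebra.comul (R := k) y)))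
  /-- (r1'): `r(x⊗y) = Σ r(x⁽¹⁾⊗y⁽¹⁾)ε(y⁽²⁾x⁽²⁾)`. -/
  rform_eq₂ : ∀ x y : H,
    rform (x ⊗ₜ[k] y) =
      TensorProduct.lid k k
        ((TensorProduct.map rform
            ((Coalgebra.counit (R := k) (A := H)) ∘ₗ LinearMap.mul' k H ∘ₗ
              (TensorProduct.comm k H H).toLinearMap))
          ((TensorProduct.tensorTensorTensorComm k H H H H)
            (Coalgebra.comul (R := k) x ⊗ₜ[k] Coalgebra.comul (R := k) y)))
  /-- (r2): `Σ r̄(x⁽¹⁾⊗y⁽¹⁾)r(x⁽²⁾⊗y⁽²⁾) = ε(yx)`. -/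
  rbar_rform : ∀ x y : H,
    TensorProduct.lid k k
        ((TensorProduct.map rbar rform)
          ((TensorProduct.tensorTensorTensorComm k H H H H)
            (Coalgebra.comul (R := k) x ⊗ₜ[k] Coalgebra.comul (R := k) y))) =
      Coalgebra.counit (R := k) (y * x)
  /-- (r2'): `Σ r(x⁽¹⁾⊗y⁽¹⁾)r̄(x⁽²⁾⊗y⁽²⁾) = ε(xy)`. -/
  rform_rbar : ∀ x y : H,
    TensorProduct.lid k k
        ((TensorProduct.map rform rbar)
          ((TensorProduct.tensorTensorTensorComm k H H H H)
            (Coalgebra.comul (R := k) x ⊗ₜ[k] Coalgebra.comul (R := k) y))) =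
      Coalgebra.counit (R := k) (x * y)
  /-- (r3): `Σ x⁽¹⁾y⁽¹⁾ r(x⁽²⁾⊗y⁽²⁾) = Σ r(x⁽¹⁾⊗y⁽¹⁾) y⁽²⁾x⁽²⁾`. -/
  almost_comm : ∀ x y : H,
    TensorProduct.rid k H
        ((TensorProduct.map (LinearMap.mul' k H) rform)
          ((TensorProduct.tensorTensorTensorComm k H H H H)
            (Coalgebra.comul (R := k) x ⊗ₜ[k] Coalgebra.comul (R := k) y))) =
      TensorProduct.lid k H
        ((TensorProduct.map rform
            (LinearMap.mul' k H ∘ₗ (TensorProduct.comm k H H).toLinearMap))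
          ((TensorProduct.tensorTensorTensorComm k H H H H)
            (Coalgebra.comul (R := k) x ⊗ₜ[k] Coalgebra.comul (R := k) y)))
  /-- (r4): `r(xy⊗z) = Σ r(y⊗z⁽¹⁾)r(x⊗z⁽²⁾)`. -/
  rform_mul_left : ∀ x y z : H,
    rform ((x * y) ⊗ₜ[k] z) =
      TensorProduct.lid k k
        ((TensorProduct.map (rform ∘ₗ TensorProduct.mk k H H y)
            (rform ∘ₗ TensorProduct.mk k H H x)) (Coalgebra.comul (R := k) z))
  /-- (r5): `r(x⊗yz) = Σ r(x⁽¹⁾⊗y)r(x⁽²⁾⊗z)`. -/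
  rform_mul_right : ∀ x y z : H,
    rform (x ⊗ₜ[k] (y * z)) =
      TensorProduct.lid k k
        ((TensorProduct.map (rform ∘ₗ (TensorProduct.mk k H H).flip y)
            (rform ∘ₗ (TensorProduct.mk k H H).flip z)) (Coalgebra.comul (R := k) x))

/-- The universal `r`-form, as a linear map. -/
noncomputable def rf [CoquasitriangularWHA k H] : H ⊗[k] H →ₗ[k] k :=
  CoquasitriangularWHA.rform (k := k) (H := H)

namespace RFormExchange

section Convolution

variable {k} {C : Type*} [AddCommGroup C] [Module k C] [Coalgebra k C]

/-- The convolution product of two functionals on a coalgebra. -/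
noncomputable def conv (f g : C →ₗ[k] k) : C →ₗ[k] k :=
  (TensorProduct.lid k k).toLinearMap ∘ₗ TensorProduct.map f g ∘ₗ Coalgebra.comul

lemma conv_assoc (f g h : C →ₗ[k] k) : conv (conv f g) h = conv f (conv g h) := by
  ext c
  have key := congrArg
    (TensorProduct.lid k k ∘ (TensorProduct.lid k k).lTensor k ∘
      TensorProduct.map f (TensorProduct.map g h)) (Coalgebra.coassoc_apply (R := k) c)
  have e1 : ∀ t : C ⊗[k] C, TensorProduct.lid k k (TensorProduct.map (conv f g) h t) =
      (TensorProduct.lid k k ∘ (TensorProduct.lid k k).lTensor k ∘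
      TensorProduct.map f (TensorProduct.map g h))
        (TensorProduct.assoc k C C C (Coalgebra.comul.rTensor C t)) := by
    intro t
    induction t with
    | zero => simp
    | add u v hu hv => simp_all
    | tmul u v =>
      simp only [conv, LinearMap.rTensor_tmul, TensorProduct.map_tmul, LinearMap.comp_apply]
      generalize (Coalgebra.comul (R := k) u) = w
      induction w with
      | zero => simp
      | add p q hp hq => simp_all [TensorProduct.add_tmul]
      | tmul p q => simp [mul_assoc]
  have e2 : ∀ t : C ⊗[k] C, TensorProduct.lid k k (TensorProduct.map f (conv g h) t) =
      (TensorProduct.lid k k ∘ (TensorProduct.lid k k).lTensor k ∘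
      TensorProduct.map f (TensorProduct.map g h)) (Coalgebra.comul.lTensor C t) := by
    intro t
    induction t with
    | zero => simp
    | add u v hu hv => simp_all
    | tmul u v => simp [conv]
  calc _ = _ := e1 _
    _ = _ := key
    _ = _ := (e2 _).symm

end Convolution

variable {k H}

section WBA

variable [WeakBialgebra k H]

local notation "ε" => Coalgebra.counit (R := k) (A := H)

/-- The functional `x ⊗ y ↦ ε(xy)`. -/
noncomputable def cmul : H ⊗[k] H →ₗ[k] k := ε ∘ₗ LinearMap.mul' k H

/-- The functional `x ⊗ y ↦ ε(yx)`. -/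
noncomputable def cmulOp : H ⊗[k] H →ₗ[k] k :=
  ε ∘ₗ LinearMap.mul' k H ∘ₗ (TensorProduct.comm k H H).toLinearMap

/-- The functional `x ⊗ y ↦ ε(ax) ε(yb)`. -/
noncomputable def splitXY (a b : H) : H ⊗[k] H →ₗ[k] k :=
  (TensorProduct.lid k k).toLinearMap ∘ₗ
    TensorProduct.map (ε ∘ₗ LinearMap.mulLeft k a) (ε ∘ₗ LinearMap.mulRight k b)

/-- The functional `h ↦ ε(ahb)`. -/
noncomputable def sandwich (a b : H) : H →ₗ[k] k :=
  ε ∘ₗ LinearMap.mulRight k b ∘ₗ LinearMap.mulLeft k a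

lemma counit_mul_mul_repr (x z : H) {y : H} (R : Coalgebra.Repr k y (H × H)) :
    ε (x * y * z) = ∑ i ∈ R.index, ε (x * R.left i) * ε (R.right i * z) := by
  rw [WeakBialgebra.counit_mul_mul, ← R.eq]
  simp

lemma counit_mul_mul_repr' (x z : H) {y : H} (R : Coalgebra.Repr k y (H × H)) :
    ε (x * y * z) = ∑ i ∈ R.index, ε (R.left i * z) * ε (x * R.right i) := by
  rw [WeakBialgebra.counit_mul_mul', ← R.eq]
  simp

lemma conv_tmul_repr (f g : H ⊗[k] H →ₗ[k] k) {x y : H} (R : Coalgebra.Repr k x (H × H))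
    (Q : Coalgebra.Repr k y (H × H)) :
    conv f g (x ⊗ₜ[k] y) = ∑ i ∈ R.index, ∑ j ∈ Q.index,
      f (R.left i ⊗ₜ Q.left j) * g (R.right i ⊗ₜ Q.right j) := by
  change TensorProduct.lid k k (TensorProduct.map f g
    (TensorProduct.tensorTensorTensorComm k H H H H
      (Coalgebra.comul (R := k) x ⊗ₜ[k] Coalgebra.comul (R := k) y))) = _
  rw [← R.eq, ← Q.eq]
  simp [TensorProduct.sum_tmul, TensorProduct.tmul_sum]
  rw [Finset.sum_comm]

/-- `Σ ε(y⁽¹⁾x⁽¹⁾) ε(a y⁽²⁾) ε(x⁽²⁾ b) = ε(a y x b)`. -/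
lemma counit_swap_conv (a b : H) :
    conv cmulOp (splitXY a b ∘ₗ (TensorProduct.comm k H H).toLinearMap) =
      sandwich a b ∘ₗ LinearMap.mul' k H ∘ₗ (TensorProduct.comm k H H).toLinearMap := by
  ext x y
  let R := Coalgebra.Repr.arbitrary k x
  let Q := Coalgebra.Repr.arbitrary k y
  have h : ε (a * y * x * b) = ∑ i ∈ R.index, ∑ j ∈ Q.index,
      ε (Q.left j * R.left i) * (ε (a * Q.right j) * ε (R.right i * b)) := by
    rw [counit_mul_mul_repr (a * y) b R]
    refine Finset.sum_congr rfl fun i _ => ?_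
    rw [counit_mul_mul_repr' a (R.left i) Q, Finset.sum_mul]
    exact Finset.sum_congr rfl fun j _ => by ring
  simpa [conv_tmul_repr _ _ R Q, cmulOp, splitXY, sandwich, mul_assoc] using h.symm

/-- `Σ ε(a x⁽¹⁾) ε(y⁽¹⁾ b) ε(x⁽²⁾y⁽²⁾) = ε(a x y b)`. -/
lemma conv_counit (a b : H) :
    conv (splitXY a b) cmul = sandwich a b ∘ₗ LinearMap.mul' k H := by
  ext x y
  let R := Coalgebra.Repr.arbitrary k x
  let Q := Coalgebra.Repr.arbitrary k y
  have h : ε (a * x * y * b) = ∑ i ∈ R.index, ∑ j ∈ Q.index,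
      ε (a * R.left i) * ε (Q.left j * b) * ε (R.right i * Q.right j) := by
    rw [counit_mul_mul_repr' (a * x) b Q, Finset.sum_comm]
    refine Finset.sum_congr rfl fun j _ => ?_
    rw [counit_mul_mul_repr a (Q.right j) R, Finset.mul_sum]
    exact Finset.sum_congr rfl fun i _ => by ring
  simpa [conv_tmul_repr _ _ R Q, cmul, splitXY, sandwich, mul_assoc] using h.symm

/-- With `Δ(1) = Σ aᵢ ⊗ bᵢ`, the product `ε_t(x) ε_s(y)` is `Σ ε(aᵢ x) ε(y bⱼ) bᵢ aⱼ`. -/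
lemma mul_counital_maps (R : Coalgebra.Repr k (1 : H) (H × H)) (t : H ⊗[k] H) :
    LinearMap.mul' k H (TensorProduct.map (εt k H) (εs k H) t) =
      ∑ i ∈ R.index, ∑ j ∈ R.index,
        splitXY (R.left i) (R.right j) t • (R.right i * R.left j) := by
  induction t with
  | zero => simp
  | add u v hu hv => simp [hu, hv, add_smul, Finset.sum_add_distrib]
  | tmul x y =>
    have h1 : εt k H x = ∑ i ∈ R.index, ε (R.left i * x) • R.right i := by
      simp [εt, ← R.eq, Finset.sum_mul]
    have h2 : εs k H y = ∑ j ∈ R.index, ε (y * R.right j) • R.left j := by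
      simp [εs, ← R.eq, Finset.mul_sum]
    simp [h1, h2, splitXY, Finset.sum_mul_sum, smul_smul, mul_comm (ε (y * _))]

end WBA

variable [CoquasitriangularWHA k H]

lemma rf_conv_cmulOp : conv (rf k H) cmulOp = rf k H := by
  ext x y
  exact (CoquasitriangularWHA.rform_eq₂ x y).symm

lemma cmul_conv_rf : conv cmul (rf k H) = rf k H := by
  ext x y
  exact (CoquasitriangularWHA.rform_eq₁ x y).symm

/-- Axiom (r3) tested against an arbitrary functional on `H`. -/
lemma conv_rf_almost_comm (φ : H →ₗ[k] k) :
    conv (rf k H) (φ ∘ₗ LinearMap.mul' k H ∘ₗ (TensorProduct.comm k H H).toLinearMap) =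
      conv (φ ∘ₗ LinearMap.mul' k H) (rf k H) := by
  ext x y
  have h := congrArg φ (CoquasitriangularWHA.almost_comm (k := k) x y)
  change TensorProduct.lid k k (TensorProduct.map _ _
    (TensorProduct.tensorTensorTensorComm k H H H H
      (Coalgebra.comul (R := k) x ⊗ₜ[k] Coalgebra.comul (R := k) y))) =
    TensorProduct.lid k k (TensorProduct.map _ _
    (TensorProduct.tensorTensorTensorComm k H H H H
      (Coalgebra.comul (R := k) x ⊗ₜ[k] Coalgebra.comul (R := k) y)))
  generalize TensorProduct.tensorTensorTensorComm k H H H H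
      (Coalgebra.comul (R := k) x ⊗ₜ[k] Coalgebra.comul (R := k) y) = t at h ⊢
  refine Eq.trans ?_ (h.symm.trans ?_)
  · clear h
    induction t with
    | zero => simp
    | add u v hu hv => simp only [map_add, hu, hv]
    | tmul u v => simp [rf]
  · clear h
    induction t with
    | zero => simp
    | add u v hu hv => simp only [map_add, hu, hv]
    | tmul u v => simp [rf, mul_comm]

/-- The scalar form of the exchange identity:
`Σ r(x⁽¹⁾⊗y⁽¹⁾) ε(a y⁽²⁾) ε(x⁽²⁾ b) = Σ ε(a x⁽¹⁾) ε(y⁽¹⁾ b) r(x⁽²⁾⊗y⁽²⁾)`. -/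
lemma conv_exchange (a b : H) :
    conv (rf k H) (splitXY a b ∘ₗ (TensorProduct.comm k H H).toLinearMap) =
      conv (splitXY a b) (rf k H) := by
  conv_lhs => rw [← rf_conv_cmulOp, conv_assoc, counit_swap_conv, conv_rf_almost_comm]
  conv_rhs => rw [← cmul_conv_rf, ← conv_assoc, conv_counit]

end RFormExchange

open RFormExchange in
/-- In a coquasitriangular weak Hopf algebra over a field,
`Σ r(x⁽¹⁾⊗y⁽¹⁾)·ε_t(y⁽²⁾)·ε_s(x⁽²⁾) = Σ ε_t(x⁽¹⁾)·ε_s(y⁽¹⁾)·r(x⁽²⁾⊗y⁽²⁾)`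
for all `x, y ∈ H`. -/
theorem rform_counital_exchange [CoquasitriangularWHA k H] :
    ∀ x y : H,
      TensorProduct.lid k H
        ((TensorProduct.map (rf k H)
            (LinearMap.mul' k H ∘ₗ (TensorProduct.map (εt k H) (εs k H)) ∘ₗ
              (TensorProduct.comm k H H).toLinearMap))
          ((TensorProduct.tensorTensorTensorComm k H H H H)
            (Coalgebra.comul (R := k) x ⊗ₜ[k] Coalgebra.comul (R := k) y))) =
      TensorProduct.rid k H
        ((TensorProduct.map (LinearMap.mul' k H ∘ₗ TensorProduct.map (εt k H) (εs k H))
            (rf k H))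
          ((TensorProduct.tensorTensorTensorComm k H H H H)
            (Coalgebra.comul (R := k) x ⊗ₜ[k] Coalgebra.comul (R := k) y))) := by
  intro x y
  let R := Coalgebra.Repr.arbitrary k (1 : H)
  have key := fun i j => LinearMap.congr_fun
    (conv_exchange (k := k) (R.left i) (R.right j)) (x ⊗ₜ[k] y)
  change ∀ i j, TensorProduct.lid k k (TensorProduct.map _ _
    (TensorProduct.tensorTensorTensorComm k H H H H
      (Coalgebra.comul (R := k) x ⊗ₜ[k] Coalgebra.comul (R := k) y))) =
    TensorProduct.lid k k (TensorProduct.map _ _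
    (TensorProduct.tensorTensorTensorComm k H H H H
      (Coalgebra.comul (R := k) x ⊗ₜ[k] Coalgebra.comul (R := k) y))) at key
  generalize TensorProduct.tensorTensorTensorComm k H H H H
      (Coalgebra.comul (R := k) x ⊗ₜ[k] Coalgebra.comul (R := k) y) = t at key ⊢
  trans ∑ i ∈ R.index, ∑ j ∈ R.index, (TensorProduct.lid k k (TensorProduct.map (rf k H)
    (splitXY (R.left i) (R.right j) ∘ₗ (TensorProduct.comm k H H).toLinearMap) t)) •
      (R.right i * R.left j)
  · clear key
    induction t with
    | zero => simp
    | add u v hu hv => simp only [map_add, hu, hv, add_smul, Finset.sum_add_distrib]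
    | tmul u v =>
      simp [mul_counital_maps R, Finset.smul_sum, smul_smul]
  · simp only [key]
    clear key
    induction t with
    | zero => simp
    | add u v hu hv => simp only [map_add, hu, hv, add_smul, Finset.sum_add_distrib]
    | tmul u v =>
      simp [mul_counital_maps R, Finset.smul_sum, smul_smul, mul_comm]
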